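/- If 0 < ε < 1/100 and G is a graph with density d(G) ≥ 2/ε, then G contains either (1) a subgraph J such that |V(J)| ≤ d(G)/(2ε) and d(J) ≥ ε·d(G), or (2) a minor H such that d(H) ≥ (1+ε)·d(G). -/

import Mathlib

open SimpleGraph

/-- The degree of a vertex: the number of neighbours. -/
noncomputable def deg {V : Type*} (G : SimpleGraph V) (v : V) : ℕ :=
  (G.neighborSet v).ncard

/-- The minimum degree of a graph. -/
noncomputable def minDeg {V : Type*} (G : SimpleGraph V) : ℕ :=
  sInf (Set.range (deg G))

/-- The maximum degree of a graph. -/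
noncomputable def maxDeg {V : Type*} (G : SimpleGraph V) : ℕ :=
  sSup (Set.range (deg G))

/-- The density of a graph: number of edges divided by number of vertices. -/
noncomputable def density {V : Type*} (G : SimpleGraph V) : ℝ :=
  (G.edgeSet.ncard : ℝ) / (Nat.card V : ℝ)

/-- The density of a subgraph of `G`. -/
noncomputable def subDensity {V : Type*} {G : SimpleGraph V} (J : G.Subgraph) : ℝ :=
  (J.edgeSet.ncard : ℝ) / (J.verts.ncard : ℝ)

/-- A model (branch decomposition) of `H` in `G`: pairwise disjoint branch sets,
each inducing a connected (in particular nonempty) subgraph, with an edge of `G`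
between the branch sets of any two adjacent vertices of `H`. -/
def IsModel {α β : Type*} (H : SimpleGraph α) (G : SimpleGraph β) (μ : α → Set β) : Prop :=
  (∀ u v : α, u ≠ v → Disjoint (μ u) (μ v)) ∧
  (∀ v : α, (G.induce (μ v)).Connected) ∧
  (∀ u v : α, H.Adj u v → ∃ a ∈ μ u, ∃ b ∈ μ v, G.Adj a b)

/-- `H` is a minor of `G`: there is a model of `H` in `G`. -/
def IsMinor {α β : Type*} (H : SimpleGraph α) (G : SimpleGraph β) : Prop :=
  ∃ μ : α → Set β, IsModel H G μ

/-- `H` is isomorphic to a subgraph of `G`. -/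
def IsSubgraphEmb {α β : Type*} (H : SimpleGraph α) (G : SimpleGraph β) : Prop :=
  ∃ f : α ↪ β, ∀ u v : α, H.Adj u v → G.Adj (f u) (f v)

/-- A (proper) separation of `G`. -/
def IsSeparation {V : Type*} (G : SimpleGraph V) (A B : Set V) : Prop :=
  A ∪ B = Set.univ ∧ ¬ A ⊆ B ∧ ¬ B ⊆ A ∧
    ∀ u ∈ A \ B, ∀ v ∈ B \ A, ¬ G.Adj u v

/-- The pair `(G, X)` is `k`-dense: `X` is a proper subset of the vertices, and for
every separation of order at most `k` one of the two sides is contained in `X`. -/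
def KDense {V : Type*} (G : SimpleGraph V) (X : Set V) (k : ℝ) : Prop :=
  X ≠ Set.univ ∧
  ∀ A B : Set V, IsSeparation G A B → ((A ∩ B).ncard : ℝ) ≤ k →
    A \ B ⊆ X ∨ B \ A ⊆ X

/-- The pair `(G, X)` is `(d, k)`-dense. -/
def DensePair {V : Type*} (G : SimpleGraph V) (X : Set V) (d k : ℝ) : Prop :=
  X ≠ Set.univ ∧
  (∀ v : V, v ∉ X → d ≤ (deg G v : ℝ)) ∧
  ∀ A B : Set V, IsSeparation G A B → ((A ∩ B).ncard : ℝ) ≤ k →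
    A \ B ⊆ X ∨ B \ A ⊆ X

/-- A graph family (of finite graphs, represented on the vertex sets `Fin n`) with
strongly sublinear separators: closed under subgraphs, and there are `c > 0` and
`0 < β < 1` such that every member has a balanced separation of order ≤ `c * n ^ β`. -/
def SSLS (F : ∀ n : ℕ, SimpleGraph (Fin n) → Prop) : Prop :=
  (∀ (n m : ℕ) (G : SimpleGraph (Fin n)) (H : SimpleGraph (Fin m)),
      F n G → IsSubgraphEmb H G → F m H) ∧
  ∃ c : ℝ, 0 < c ∧ ∃ β : ℝ, 0 < β ∧ β < 1 ∧
    ∀ (n : ℕ) (G : SimpleGraph (Fin n)), F n G →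
      ∃ A B : Set (Fin n), IsSeparation G A B ∧
        (A.ncard : ℝ) ≤ 2 / 3 * n ∧ (B.ncard : ℝ) ≤ 2 / 3 * n ∧
        ((A ∩ B).ncard : ℝ) ≤ c * (n : ℝ) ^ (β : ℝ)

/-- The extremal function `c(H)`: the supremum of densities of non-null graphs
with no `H` minor. -/
noncomputable def extremalFunction {α : Type*} (H : SimpleGraph α) : ℝ :=
  sSup {x : ℝ | ∃ (n : ℕ) (G : SimpleGraph (Fin n)), 0 < n ∧ ¬ IsMinor H G ∧ density G = x}

/-- `G` is `H`-linked: `G` has at least as many vertices as `H` and every injection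
`φ` of the vertices of `H` into those of `G` extends to a `φ`-rooted model of `H`. -/
def IsLinked {α β : Type*} (H : SimpleGraph α) (G : SimpleGraph β) : Prop :=
  Nat.card α ≤ Nat.card β ∧
  ∀ φ : α ↪ β, ∃ μ : α → Set β, IsModel H G μ ∧ ∀ v : α, φ v ∈ μ v

/-- `H'` is obtained from `H` by a simple edge extension: adding a new vertex joined
by an edge to at most one vertex of `H`, or two new vertices joined by an edge. -/
def IsSimpleEdgeExt {α β : Type*} (H : SimpleGraph α) (H' : SimpleGraph β) : Prop :=
  ∃ f : α ↪ β,
    ((∃ x : β, x ∉ Set.range f ∧ (∀ y : β, y = x ∨ y ∈ Set.range f) ∧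
       ((∀ u v : β, H'.Adj u v ↔ ∃ a b : α, u = f a ∧ v = f b ∧ H.Adj a b) ∨
        (∃ a : α, ∀ u v : β, H'.Adj u v ↔
          ((∃ a' b' : α, u = f a' ∧ v = f b' ∧ H.Adj a' b') ∨
           (u = x ∧ v = f a) ∨ (v = x ∧ u = f a))))) ∨
     (∃ x y : β, x ≠ y ∧ x ∉ Set.range f ∧ y ∉ Set.range f ∧
       (∀ z : β, z = x ∨ z = y ∨ z ∈ Set.range f) ∧
       (∀ u v : β, H'.Adj u v ↔
         ((∃ a b : α, u = f a ∧ v = f b ∧ H.Adj a b) ∨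
          (u = x ∧ v = y) ∨ (u = y ∧ v = x)))))

/-- `J` is a `k`-edge extension of `H`: obtained by a sequence of at most `k`
simple edge extensions (up to isomorphism). -/
def IsKEdgeExt {α β : Type*} (k : ℕ) (H : SimpleGraph α) (J : SimpleGraph β) : Prop :=
  ∃ j : ℕ, j ≤ k ∧ ∃ c : ℕ → (Σ n : ℕ, SimpleGraph (Fin n)),
    Nonempty (H ≃g (c 0).2) ∧ Nonempty (J ≃g (c j).2) ∧
    ∀ i : ℕ, i < j → IsSimpleEdgeExt (c i).2 (c (i + 1)).2

/-- `G` is `(H + k)`-linked: `G` is `J`-linked for every `k`-edge extension `J` of `H`. -/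
def IsPlusKLinked {α β : Type*} (H : SimpleGraph α) (k : ℕ) (G : SimpleGraph β) : Prop :=
  ∀ (m : ℕ) (J : SimpleGraph (Fin m)), IsKEdgeExt k H J → IsLinked J G

-- The connectivity of `G`: the minimum order of a separation, except for complete
-- graphs, where it is the number of vertices minus one.
open scoped Classical in
noncomputable def connectivity {V : Type*} (G : SimpleGraph V) : ℕ :=
  if ∀ u v : V, u ≠ v → G.Adj u v then Nat.card V - 1
  else sInf {k : ℕ | ∃ A B : Set V, IsSeparation G A B ∧ (A ∩ B).ncard = k}

/-!
Suppose that neither outcome holds. Deleting vertices of small degree, we may assume that every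
vertex has degree at least `d = d(G)`. We contract disjoint stars, moving one vertex `v` at a time
into a neighbour `u`; this loses one edge, one for each common neighbour of `u` and `v`, and
possibly one for each neighbour of `v` contracted earlier. If a step loses at most `d / 2` edges,
then after `⌈2εn⌉` steps the number of vertices has dropped by the factor `1 - 2ε` and the number
of edges only by about `εdn`, so the density exceeds `(1 + ε)d`.

To find such a step, orient the contracted graph with out-degrees at most `2.02 d`, which is
possible because all its subgraphs are minors of `G`. The number of arcs `x → y` inside the
neighbourhood of `v`, summed over `v`, counts the edges of `G` between the neighbourhood of `x` and
the out-neighbourhood of `x`, summed over `x`. Cutting the former into blocks of about `40 d`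
vertices, local sparsity makes this sum small. Hence some `v`, whose degree may be taken at most
`5 d` to keep later steps cheap, has few arcs inside its neighbourhood and few neighbours
contracted earlier, and then some neighbour `u` of `v` has few common neighbours with `v`.
-/

section

open Finset

variable {V W : Type*}

lemma card_interedges_eq_sum (G : SimpleGraph V) [DecidableRel G.Adj] (S T : Finset V) :
    #(G.interedges S T) = ∑ u ∈ S, #{w ∈ T | G.Adj u w} := by
  simp only [interedges_def, card_filter, sum_product]

lemma card_interedges_comap (G : SimpleGraph W) [DecidableRel G.Adj] (f : V ↪ W)
    [DecidableRel (G.comap f).Adj] (S T : Finset V) :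
    #((G.comap f).interedges S T) = #(G.interedges (S.map f) (T.map f)) := by
  simp only [card_interedges_eq_sum, sum_map, filter_map, card_map, comap_adj,
    Function.comp_def]

lemma card_interedges_univ [Fintype V] (G : SimpleGraph V) [DecidableRel G.Adj] :
    #(G.interedges univ univ) = 2 * G.edgeSet.ncard := by
  rw [card_interedges_eq_sum, ← coe_edgeFinset, Set.ncard_coe_finset,
    ← G.sum_degrees_eq_twice_card_edges]
  simp only [← card_neighborFinset_eq_degree, neighborFinset_eq_filter]

lemma card_interedges_self (G : SimpleGraph V) [DecidableRel G.Adj] (S : Finset V) :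
    #(G.interedges S S) = 2 * (G.induce (S : Set V)).edgeSet.ncard := by
  classical
  have hmap : univ.map (Function.Embedding.subtype (· ∈ S)) = S := by
    rw [univ_eq_attach, attach_map_val]
  have hcomap := card_interedges_comap G (Function.Embedding.subtype (· ∈ S)) univ univ
  rw [hmap, card_interedges_univ] at hcomap
  exact hcomap.symm

lemma card_interedges_univ_eq_density [Fintype V] [Nonempty V] (G : SimpleGraph V)
    [DecidableRel G.Adj] :
    (#(G.interedges univ univ) : ℝ) = 2 * density G * Fintype.card V := by
  rw [card_interedges_univ, density, Nat.card_eq_fintype_card]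
  push_cast
  field_simp

lemma exists_degree_mul_card_le_card_interedges (G : SimpleGraph V) [DecidableRel G.Adj]
    {S : Finset V} (hS : S.Nonempty) :
    ∃ u ∈ S, #{w ∈ S | G.Adj u w} * #S ≤ #(G.interedges S S) := by
  refine exists_le_of_sum_le hS ?_
  rw [← sum_mul, ← card_interedges_eq_sum, sum_const, smul_eq_mul, mul_comm]

lemma card_interedges_le_card_interedges_erase [DecidableEq V] (G : SimpleGraph V)
    [DecidableRel G.Adj] (S : Finset V) (v : V) :
    #(G.interedges S S) ≤
      #(G.interedges (S.erase v) (S.erase v)) + 2 * #{w ∈ S | G.Adj v w} := by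
  have hsub : G.interedges S S ⊆ G.interedges (S.erase v) (S.erase v) ∪
      (G.interedges {v} S ∪ G.interedges S {v}) := by
    rintro ⟨x, y⟩
    simp only [mem_union, mk_mem_interedges_iff, mem_erase, mem_singleton]
    tauto
  have hstar : #(G.interedges {v} S) = #{w ∈ S | G.Adj v w} := by
    rw [card_interedges_eq_sum, sum_singleton]
  have hcomm : #(G.interedges S {v}) = #(G.interedges {v} S) :=
    haveI : Std.Symm G.Adj := G.symm
    Rel.card_interedges_comm _ _
  have := card_le_card hsub
  have := card_union_le (G.interedges (S.erase v) (S.erase v))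
    (G.interedges {v} S ∪ G.interedges S {v})
  have := card_union_le (G.interedges {v} S) (G.interedges S {v})
  lia

lemma exists_subset_forall_le_degree (G : SimpleGraph V) [DecidableRel G.Adj] {d : ℝ}
    (hd : 0 < d) (S : Finset V) (hS : S.Nonempty) (hdS : 2 * d * #S ≤ #(G.interedges S S)) :
    ∃ W ⊆ S, W.Nonempty ∧ 2 * d * #W ≤ #(G.interedges W W) ∧
      ∀ v ∈ W, d ≤ #{w ∈ W | G.Adj v w} := by
  classical
  induction S using Finset.strongInduction with
  | H S ih =>
    by_cases hmin : ∀ v ∈ S, d ≤ #{w ∈ S | G.Adj v w}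
    · exact ⟨S, Subset.rfl, hS, hdS, hmin⟩
    push Not at hmin
    obtain ⟨v, hv, hvd⟩ := hmin
    have hcard : (#(S.erase v) : ℝ) = #S - 1 := cast_card_erase_of_mem hv
    have herase : (#(G.interedges S S) : ℝ) ≤
        #(G.interedges (S.erase v) (S.erase v)) + 2 * #{w ∈ S | G.Adj v w} :=
      mod_cast card_interedges_le_card_interedges_erase G S v
    have hne : (S.erase v).Nonempty := by
      by_contra hempty
      rw [not_nonempty_iff_eq_empty] at hempty
      simp only [hempty, card_empty, interedges_empty_left, Nat.cast_zero] at hcard herase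
      nlinarith
    obtain ⟨W, hWS, hW⟩ := ih _ (erase_ssubset hv) hne (by rw [hcard]; linarith)
    exact ⟨W, hWS.trans (erase_subset _ _), hW⟩

/-- Every set `S` of at most `q` vertices of `G` spans at most `c |S|` edges. -/
def LocallySparse (G : SimpleGraph V) (q c : ℝ) : Prop :=
  ∀ S : Finset V, (#S : ℝ) ≤ q → ((G.induce (S : Set V)).edgeSet.ncard : ℝ) ≤ c * #S

namespace LocallySparse

variable {G : SimpleGraph V} {q q' c c' : ℝ}

lemma mono (hG : LocallySparse G q c) (hq : q' ≤ q) (hc : c ≤ c') : LocallySparse G q' c' :=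
  fun S hS => (hG S (hS.trans hq)).trans (by gcongr)

lemma comap (hG : LocallySparse G q c) (f : W ↪ V) : LocallySparse (G.comap f) q c := by
  classical
  intro S hS
  have h := hG (S.map f) (by rwa [card_map])
  have hcard : #((G.comap f).interedges S S) = #(G.interedges (S.map f) (S.map f)) :=
    card_interedges_comap G f S S
  rw [card_interedges_self, card_interedges_self] at hcard
  rwa [card_map, ← Nat.eq_of_mul_eq_mul_left two_pos hcard] at h

lemma card_interedges_self_le (hG : LocallySparse G q c) [DecidableRel G.Adj] {S : Finset V}
    (hS : (#S : ℝ) ≤ q) : (#(G.interedges S S) : ℝ) ≤ 2 * c * #S := by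
  rw [card_interedges_self, Nat.cast_mul, Nat.cast_ofNat, mul_assoc]
  gcongr
  exact hG S hS

lemma card_interedges_le_of_card_add_le (hG : LocallySparse G q c) [DecidableRel G.Adj]
    (hc : 0 ≤ c) {S T : Finset V} (hST : (#S + #T : ℝ) ≤ q) :
    (#(G.interedges S T) : ℝ) ≤ 2 * c * (#S + #T) := by
  classical
  have hunion : (#(S ∪ T) : ℝ) ≤ #S + #T := mod_cast card_union_le S T
  calc (#(G.interedges S T) : ℝ) ≤ #(G.interedges (S ∪ T) (S ∪ T)) :=
        mod_cast card_le_card (G.interedges_mono subset_union_left subset_union_right)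
    _ ≤ 2 * c * #(S ∪ T) := hG.card_interedges_self_le (hunion.trans hST)
    _ ≤ 2 * c * (#S + #T) := by gcongr

-- Split `S` into blocks of `s` vertices and a remainder; each block spans a small set with `T`.
lemma card_interedges_le (hG : LocallySparse G q c) [DecidableRel G.Adj] (hc : 0 ≤ c)
    {s : ℕ} (hs : 0 < s) {T : Finset V} (hsT : (s + #T : ℝ) ≤ q) (S : Finset V) :
    (#(G.interedges S T) : ℝ) ≤ 2 * c * (#S + (#S / s + 1) * #T) := by
  classical
  induction S using Finset.strongInduction with
  | H S ih =>
    have hs' : (0 : ℝ) < s := mod_cast hs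
    rcases le_total #S s with hSs | hsS
    · have hSs' : (#S : ℝ) ≤ s := mod_cast hSs
      refine (hG.card_interedges_le_of_card_add_le hc (by linarith)).trans ?_
      gcongr
      exact le_mul_of_one_le_left (by positivity) (le_add_of_nonneg_left (by positivity))
    obtain ⟨B, hBS, hBs⟩ := exists_subset_card_eq hsS
    have hrest := ih (S \ B) (sdiff_ssubset hBS (card_pos.1 (hBs ▸ hs)))
    have hblock := hG.card_interedges_le_of_card_add_le hc (S := B) (T := T) (by rwa [hBs])
    rw [cast_card_sdiff hBS, hBs, sub_div, div_self hs'.ne'] at hrest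
    rw [hBs] at hblock
    have hsplit : #(G.interedges S T) = #(G.interedges (S \ B) T) + #(G.interedges B T) := by
      simp only [card_interedges_eq_sum, sum_sdiff hBS]
    rw [hsplit]
    push_cast
    linarith

end LocallySparse

lemma exists_orientation (H : SimpleGraph V) [DecidableRel H.Adj] {k : ℝ} (hk : 0 ≤ k)
    (F : Finset V) (hF : ∀ X ⊆ F, (#(H.interedges X X) : ℝ) ≤ k * #X) :
    ∃ N : V → Finset V, (∀ u, (#(N u) : ℝ) ≤ k) ∧
      ∀ u ∈ F, ∀ w ∈ F, H.Adj u w → w ∈ N u ∨ u ∈ N w := by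
  classical
  induction F using Finset.strongInduction with
  | H F ih =>
    rcases F.eq_empty_or_nonempty with rfl | hne
    · exact ⟨fun _ => ∅, by simp [hk], by simp⟩
    obtain ⟨x, hxF, hx⟩ := exists_degree_mul_card_le_card_interedges H hne
    have hxk : (#{w ∈ F | H.Adj x w} : ℝ) ≤ k := by
      have hpos : (0 : ℝ) < #F := mod_cast hne.card_pos
      exact le_of_mul_le_mul_right ((mod_cast hx : _ ≤ (_ : ℝ)).trans (hF F Subset.rfl)) hpos
    obtain ⟨N, hNk, hN⟩ := ih (F.erase x) (erase_ssubset hxF)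
      fun X hX => hF X (hX.trans (erase_subset _ _))
    refine ⟨Function.update N x {w ∈ F | H.Adj x w}, fun u => ?_, fun u hu w hw huw => ?_⟩
    · rcases eq_or_ne u x with rfl | hux
      · simpa using hxk
      · simpa [hux] using hNk u
    · rcases eq_or_ne u x with rfl | hux
      · exact .inl (by simp [hw, huw])
      rcases eq_or_ne w x with rfl | hwx
      · exact .inr (by simp [hu, huw.symm])
      simpa [hux, hwx] using hN u (mem_erase.2 ⟨hux, hu⟩) w (mem_erase.2 ⟨hwx, hw⟩) huw

namespace IsMinor

variable {α β : Type*} {H : SimpleGraph α}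

lemma comap_left {G : SimpleGraph V} (h : IsMinor H G) (f : β ↪ α) : IsMinor (H.comap f) G := by
  obtain ⟨μ, hdisj, hconn, hadj⟩ := h
  exact ⟨μ ∘ f, fun u v huv => hdisj _ _ (f.injective.ne huv), fun v => hconn _,
    fun u v => hadj _ _⟩

lemma of_comap_right {G : SimpleGraph W} {f : V ↪ W} (h : IsMinor H (G.comap f)) :
    IsMinor H G := by
  obtain ⟨μ, hdisj, hconn, hadj⟩ := h
  refine ⟨fun a => f '' μ a, fun u v huv => ?_, fun v => ?_, fun u v huv => ?_⟩
  · exact (Set.disjoint_image_iff f.injective).2 (hdisj u v huv)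
  · let φ : (G.comap f).induce (μ v) →g G.induce (f '' μ v) :=
      ⟨fun x => ⟨f x, x, x.2, rfl⟩, id⟩
    refine (hconn v).map φ ?_
    rintro ⟨_, x, hx, rfl⟩
    exact ⟨⟨x, hx⟩, rfl⟩
  · obtain ⟨a, ha, b, hb, hab⟩ := hadj u v huv
    exact ⟨f a, ⟨a, ha, rfl⟩, f b, ⟨b, hb, rfl⟩, hab⟩

end IsMinor

/-- Every non-null minor of `G` has density less than `D`. -/
def MinorDensityLT (G : SimpleGraph V) (D : ℝ) : Prop :=
  ∀ ⦃m : ℕ⦄ (H : SimpleGraph (Fin m)), 0 < m → IsMinor H G → density H < D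

namespace MinorDensityLT

variable {α : Type*} {D : ℝ}

lemma mono {G : SimpleGraph V} {D' : ℝ} (hG : MinorDensityLT G D) (hD : D ≤ D') :
    MinorDensityLT G D' :=
  fun _ H hm hH => (hG H hm hH).trans_le hD

lemma comap {G : SimpleGraph W} (hG : MinorDensityLT G D) (f : V ↪ W) :
    MinorDensityLT (G.comap f) D :=
  fun _ H hm hH => hG H hm hH.of_comap_right

lemma card_interedges_lt {G : SimpleGraph V} (hG : MinorDensityLT G D) {H : SimpleGraph α}
    [DecidableRel H.Adj] {X : Finset α} (hX : X.Nonempty)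
    (hH : IsMinor (H.induce (X : Set α)) G) : (#(H.interedges X X) : ℝ) < 2 * D * #X := by
  let e : Fin #X ↪ X := X.equivFin.symm.toEmbedding
  have : NeZero #X := ⟨hX.card_ne_zero⟩
  have hmap : univ.map (e.trans (.subtype (· ∈ X))) = X := by
    rw [← Finset.map_map, map_univ_equiv, univ_eq_attach, attach_map_val]
  have hcomap := card_interedges_comap H (e.trans (.subtype (· ∈ X))) univ univ
  rw [hmap] at hcomap
  have hdens : density (H.comap (e.trans (.subtype (· ∈ X)))) < D :=
    hG _ hX.card_pos (hH.comap_left e)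
  rw [← hcomap, card_interedges_univ_eq_density, Fintype.card_fin]
  have : (0 : ℝ) < #X := mod_cast hX.card_pos
  gcongr

end MinorDensityLT

/-- `g` retracts the vertex set of `G` onto the fixed points of `g`, moving every other vertex
to a neighbour. Thus the fibres of `g` are stars in `G`, and `G.map g` is the graph obtained by
contracting these stars to their centres; the moved vertices stay behind as isolated vertices. -/
structure IsStarContraction (G : SimpleGraph V) (g : V → V) : Prop where
  idem : ∀ x, g (g x) = g x
  adj : ∀ x, g x ≠ x → G.Adj x (g x)

namespace IsStarContraction

variable {G : SimpleGraph V} {g : V → V}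

protected lemma id : IsStarContraction G id :=
  ⟨fun _ => rfl, fun _ h => (h rfl).elim⟩

lemma update [DecidableEq V] (hg : IsStarContraction G g) {u v : V}
    (hv : ∀ x, g x = v ↔ x = v) (hu : g u = u) (huv : G.Adj v u) :
    IsStarContraction G (Function.update g v u) := by
  refine ⟨fun x => ?_, fun x => ?_⟩
  · rcases eq_or_ne x v with rfl | hxv
    · simp [huv.ne', hu]
    · simp [hxv, (hv x).not.2 hxv, hg.idem]
  · rcases eq_or_ne x v with rfl | hxv
    · simp [huv]
    · simpa [hxv] using hg.adj x

lemma isMinor (hg : IsStarContraction G g) {X : Set V} (hX : ∀ x ∈ X, g x = x) :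
    IsMinor ((G.map g).induce X) G := by
  refine ⟨fun a => g ⁻¹' {a.1}, fun u v huv => ?_, fun a => ?_, fun u v huv => ?_⟩
  · exact (Set.disjoint_singleton.2 (Subtype.coe_injective.ne huv)).preimage g
  · rw [connected_iff_exists_forall_reachable]
    refine ⟨⟨a, hX a a.2⟩, fun ⟨x, hx⟩ => ?_⟩
    rcases eq_or_ne x a with rfl | hxa
    · rfl
    · have hxa' : G.Adj a x := hx ▸ (hg.adj x (hx.trans_ne hxa.symm)).symm
      exact Adj.reachable hxa'
  · obtain ⟨-, x, y, hxy, hx, hy⟩ := huv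
    exact ⟨x, hx, y, hy, hxy⟩

lemma map_eq_of_map_adj (hg : IsStarContraction G g) {x y : V} (hxy : (G.map g).Adj x y) :
    g x = x := by
  obtain ⟨-, a, -, -, rfl, -⟩ := hxy
  exact hg.idem a

lemma card_interedges_map_le [DecidableRel (G.map g).Adj] (hg : IsStarContraction G g) {D : ℝ}
    (hG : MinorDensityLT G D) {X : Finset V} (hX : ∀ x ∈ X, g x = x) :
    (#((G.map g).interedges X X) : ℝ) ≤ 2 * D * #X := by
  rcases X.eq_empty_or_nonempty with rfl | hne
  · simp
  · exact (hG.card_interedges_lt hne (hg.isMinor hX)).le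

lemma edgeSet_ncard_map_lt [Fintype V] [DecidableEq V] (hg : IsStarContraction G g) {D : ℝ}
    (hG : MinorDensityLT G D) (hfix : ∃ x, g x = x) :
    ((G.map g).edgeSet.ncard : ℝ) < D * #{x | g x = x} := by
  classical
  have hsub : (G.map g).interedges univ univ ⊆
      (G.map g).interedges {x | g x = x} {x | g x = x} := by
    rintro ⟨x, y⟩ hxy
    rw [mk_mem_interedges_iff] at hxy ⊢
    simpa using ⟨hg.map_eq_of_map_adj hxy.2.2, hg.map_eq_of_map_adj hxy.2.2.symm, hxy.2.2⟩
  have hlt := hG.card_interedges_lt (filter_nonempty_iff.2 (by simpa using hfix))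
    (hg.isMinor (X := ({x | g x = x} : Finset V)) (by simp))
  have hle := card_le_card hsub
  rw [card_interedges_univ] at hle
  have hlt' := (Nat.cast_le.2 hle).trans_lt hlt
  push_cast at hlt'
  linarith

end IsStarContraction

lemma isMinor_induce (G : SimpleGraph V) (X : Set V) : IsMinor (G.induce X) G := by
  simpa using (IsStarContraction.id (G := G)).isMinor (X := X) fun _ _ => rfl

lemma MinorDensityLT.edgeSet_ncard_lt [Fintype V] [Nonempty V] {G : SimpleGraph V} {D : ℝ}
    (hG : MinorDensityLT G D) : (G.edgeSet.ncard : ℝ) < D * Fintype.card V := by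
  classical
  simpa using (IsStarContraction.id (G := G)).edgeSet_ncard_map_lt hG (by simp)

lemma edgeSet_ncard_le_map_update [Finite V] [DecidableEq V] (H : SimpleGraph V) (u v : V) :
    H.edgeSet.ncard ≤
      (H.map (Function.update id v u)).edgeSet.ncard + (H.commonNeighbors u v).ncard + 1 := by
  classical
  have := Fintype.ofFinite V
  let newNbrs := (H.neighborFinset v \ H.neighborFinset u).erase u
  have hmem : ∀ {w}, w ∈ newNbrs ↔ w ≠ u ∧ H.Adj v w ∧ ¬ H.Adj u w := by
    intro w
    simp [newNbrs]
  have hsub : (H.deleteIncidenceSet v).edgeFinset ∪ newNbrs.image (s(u, ·)) ⊆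
      (H.map (Function.update id v u)).edgeFinset := by
    intro e he
    rw [mem_union, mem_image] at he
    rw [mem_edgeFinset]
    rcases he with he | ⟨w, hw, rfl⟩
    · induction e with | _ x y
      obtain ⟨hxy, hxv, hyv⟩ := deleteIncidenceSet_adj.1 (mem_edgeFinset.1 he)
      exact ⟨hxy.ne, x, y, hxy, by simp [hxv], by simp [hyv]⟩
    · obtain ⟨hwu, hvw, -⟩ := hmem.1 hw
      exact ⟨hwu.symm, v, w, hvw, by simp, by simp [hvw.ne']⟩
  have hdisj : Disjoint (H.deleteIncidenceSet v).edgeFinset (newNbrs.image (s(u, ·))) := by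
    rw [disjoint_right]
    rintro _ he he'
    obtain ⟨w, hw, rfl⟩ := mem_image.1 he
    exact (hmem.1 hw).2.2 (deleteIncidenceSet_adj.1 (mem_edgeFinset.1 he')).1
  have himage : #(newNbrs.image (s(u, ·))) = #newNbrs :=
    card_image_of_injective _ fun _ _ => Sym2.congr_right.1
  have hdeg : H.degree v ≤ #newNbrs + (H.commonNeighbors u v).ncard + 1 := by
    have hcover : H.neighborFinset v ⊆
        insert u (newNbrs ∪ (H.commonNeighbors u v).toFinset) := by
      intro w hw
      rw [mem_neighborFinset] at hw
      simp only [mem_insert, mem_union, hmem, Set.mem_toFinset, mem_commonNeighbors]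
      tauto
    rw [← card_neighborFinset_eq_degree, Set.ncard_eq_toFinset_card']
    grw [hcover, card_insert_le, card_union_le]
  have hle := card_le_card hsub
  rw [card_union_of_disjoint hdisj, himage, card_edgeFinset_deleteIncidenceSet] at hle
  rw [← coe_edgeFinset, ← coe_edgeFinset, Set.ncard_coe_finset, Set.ncard_coe_finset]
  lia

lemma edgeSet_ncard_map_le_map_update [Fintype V] [DecidableEq V] (G : SimpleGraph V)
    [DecidableRel G.Adj] {g : V → V} [DecidableRel (G.map g).Adj] {v : V}
    (hv : ∀ x, g x = v ↔ x = v) (u : V) :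
    (G.map g).edgeSet.ncard ≤ (G.map (Function.update g v u)).edgeSet.ncard +
      #{w ∈ G.neighborFinset v | g w ≠ w} +
      #{w ∈ G.neighborFinset v | g w = w ∧ (G.map g).Adj u w} + 1 := by
  have hupdate : Function.update id v u ∘ g = Function.update g v u := by
    ext x
    rcases eq_or_ne x v with rfl | hxv
    · simp [(hv x).2 rfl]
    · simp [hxv, (hv x).not.2 hxv]
  have hcommon : (G.map g).commonNeighbors u v ⊆
      ↑(({w ∈ G.neighborFinset v | g w ≠ w} : Finset V).image g ∪
        {w ∈ G.neighborFinset v | g w = w ∧ (G.map g).Adj u w}) := by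
    rintro w ⟨huw, -, a, b, hab, ha, rfl⟩
    obtain rfl := (hv a).1 ha
    by_cases hb : g b = b
    · rw [hb] at huw ⊢
      simp [hab, hb, show (G.map g).Adj u b from huw]
    · simp only [coe_union, coe_image, Set.mem_union, Set.mem_image]
      exact .inl ⟨b, by simp [hab, hb], rfl⟩
  have hloss := edgeSet_ncard_le_map_update (G.map g) u v
  rw [SimpleGraph.map_map, hupdate] at hloss
  have hcard := Set.ncard_le_ncard hcommon
  rw [Set.ncard_coe_finset] at hcard
  grw [card_union_le, card_image_le] at hcard
  lia

section Averaging

variable {G : SimpleGraph V} [DecidableRel G.Adj]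

-- `R` stands for the fixed neighbours of a vertex `v` and `a` for the number of moved ones, so that
-- `a + #{w ∈ R | G.Adj u w} + 1` bounds the number of edges lost by contracting `v` into `u`.
lemma exists_add_card_filter_adj_add_one_le {d a : ℝ} {R : Finset V} (hd : 50 ≤ d)
    (hR : d - a ≤ #R) (hweight : a * d + #(G.interedges R R) ≤ 2 / 5 * d ^ 2) :
    ∃ u ∈ R, a + #{w ∈ R | G.Adj u w} + 1 ≤ d / 2 := by
  have had : a ≤ 2 / 5 * d := by
    have : (0 : ℝ) ≤ #(G.interedges R R) := by positivity
    nlinarith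
  have hRne : R.Nonempty := card_pos.1 (by
    have : (0 : ℝ) < #R := by linarith
    exact_mod_cast this)
  obtain ⟨u, huR, hu⟩ := exists_degree_mul_card_le_card_interedges G hRne
  refine ⟨u, huR, ?_⟩
  have hu' : (#{w ∈ R | G.Adj u w} * #R : ℝ) ≤ #(G.interedges R R) := mod_cast hu
  have hmul : #{w ∈ R | G.Adj u w} * (d - a) ≤ (2 / 5 * d - a) * d := by
    calc #{w ∈ R | G.Adj u w} * (d - a) ≤ #{w ∈ R | G.Adj u w} * #R := by gcongr
      _ ≤ (2 / 5 * d - a) * d := by linarith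
  have hquad : (2 / 5 * d - a) * d ≤ (12 / 25 * d - a) * (d - a) := by
    nlinarith [sq_nonneg (a - 6 / 25 * d)]
  have := le_of_mul_le_mul_right (hmul.trans hquad) (by linarith)
  linarith

lemma card_filter_lt_mul_add_le_sum {ι : Type*} [Fintype ι] {f : ι → ℝ} {a b : ℝ}
    (hf : ∀ x, a ≤ f x) :
    (b - a) * #{x | b < f x} + a * Fintype.card ι ≤ ∑ x, f x := by
  have hpoint : ∀ x, (if b < f x then b - a else 0) + a ≤ f x := fun x => by
    split_ifs
    · linarith
    · linarith [hf x]
  calc (b - a) * #{x | b < f x} + a * Fintype.card ι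
      = ∑ x, ((if b < f x then b - a else 0) + a) := by
        rw [sum_add_distrib, ← sum_filter, sum_const, sum_const, nsmul_eq_mul, nsmul_eq_mul,
          card_univ]
        ring
    _ ≤ ∑ x, f x := sum_le_sum fun x _ => hpoint x

variable [Fintype V]

lemma sum_degree_eq_two_mul_ncard (G : SimpleGraph V) [DecidableRel G.Adj] :
    ∑ v, G.degree v = 2 * G.edgeSet.ncard := by
  rw [sum_degrees_eq_twice_card_edges, ← coe_edgeFinset, Set.ncard_coe_finset]

lemma sum_card_filter_mem_neighborFinset (G : SimpleGraph V) [DecidableRel G.Adj] (p : V → Prop)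
    [DecidablePred p] :
    ∑ v, #{w ∈ G.neighborFinset v | p w} = ∑ w with p w, G.degree w := by
  have hdouble := sum_card_bipartiteAbove_eq_sum_card_bipartiteBelow G.Adj
    (s := univ) (t := ({w | p w} : Finset V))
  simpa only [bipartiteAbove, bipartiteBelow, filter_filter, neighborFinset_eq_filter, and_comm,
    ← card_neighborFinset_eq_degree, G.adj_comm] using hdouble

lemma exists_notMem_degree_le_weight_le {d : ℝ} (hd : 0 < d) (hdeg : ∀ v, d ≤ G.degree v)
    (hsum : ∑ v, (G.degree v : ℝ) ≤ 2.02 * d * Fintype.card V) [Nonempty V] {B : Finset V}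
    (hB : (#B : ℝ) ≤ Fintype.card V / 25) {φ : V → ℝ} (hφ : ∀ v, 0 ≤ φ v)
    (hφsum : ∑ v, φ v ≤ 0.28 * d ^ 2 * Fintype.card V) :
    ∃ v ∉ B, (G.degree v : ℝ) ≤ 5 * d ∧ φ v ≤ 2 / 5 * d ^ 2 := by
  classical
  by_contra! hcover
  have hn : (0 : ℝ) < Fintype.card V := mod_cast Fintype.card_pos
  have hlarge : (#{v | 5 * d < (G.degree v : ℝ)} : ℝ) ≤ 0.255 * Fintype.card V := by
    have := (card_filter_lt_mul_add_le_sum (b := 5 * d) hdeg).trans hsum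
    nlinarith
  have hheavy : (#{v | 2 / 5 * d ^ 2 < φ v} : ℝ) ≤ 0.7 * Fintype.card V := by
    have := (card_filter_lt_mul_add_le_sum (b := 2 / 5 * d ^ 2) hφ).trans hφsum
    nlinarith [sq_pos_of_pos hd]
  have huniv : (univ : Finset V) ⊆
      B ∪ (({v | 5 * d < (G.degree v : ℝ)} : Finset V) ∪
        ({v | 2 / 5 * d ^ 2 < φ v} : Finset V)) := by
    intro v _
    simp only [mem_union, mem_filter_univ]
    by_contra! hv
    exact (hcover v hv.1 hv.2.1).not_ge hv.2.2
  have hcard := card_le_card huniv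
  grw [card_union_le, card_union_le, card_univ] at hcard
  have : (Fintype.card V : ℝ) ≤ #B +
      (#{v | 5 * d < (G.degree v : ℝ)} + #{v | 2 / 5 * d ^ 2 < φ v}) := mod_cast hcard
  linarith

lemma sum_card_filter_neighborFinset_le (p : V → Prop) [DecidablePred p] {b : ℝ}
    (hp : ∀ w, p w → (G.degree w : ℝ) ≤ b) :
    ∑ v, (#{w ∈ G.neighborFinset v | p w} : ℝ) ≤ #{w | p w} * b := by
  calc ∑ v, (#{w ∈ G.neighborFinset v | p w} : ℝ) = ∑ w with p w, (G.degree w : ℝ) :=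
        mod_cast sum_card_filter_mem_neighborFinset G p
    _ ≤ #{w | p w} * b := by
        rw [← nsmul_eq_mul]
        exact sum_le_card_nsmul _ _ _ fun w hw => hp w (by simpa using hw)

/-- The arcs `(x, y)`, `y ∈ N x`, of an orientation given by out-neighbourhoods `N`, both ends of
which are neighbours of `v` in `G`. -/
def arcsInNeighborhood (G : SimpleGraph V) [DecidableRel G.Adj] [DecidableEq V]
    (N : V → Finset V) (v : V) : Finset (V × V) :=
  {a | a.2 ∈ N a.1 ∧ G.Adj v a.1 ∧ G.Adj v a.2}

variable [DecidableEq V] {N : V → Finset V}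

lemma sum_card_arcsInNeighborhood (G : SimpleGraph V) [DecidableRel G.Adj] (N : V → Finset V) :
    ∑ v, #(arcsInNeighborhood G N v) = ∑ x, #(G.interedges (G.neighborFinset x) (N x)) := by
  simp only [arcsInNeighborhood, card_interedges_eq_sum, neighborFinset_eq_filter]
  simp only [card_filter, Fintype.sum_prod_type, sum_filter]
  rw [sum_comm]
  refine sum_congr rfl fun x _ => sum_congr rfl fun v _ => ?_
  by_cases hxv : G.Adj x v
  · simp [hxv, hxv.symm, ite_and]
  · simp [hxv, G.adj_comm v x]

lemma card_interedges_le_two_mul_card_arcsInNeighborhood {H : SimpleGraph V} [DecidableRel H.Adj]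
    {v : V} {R : Finset V} (hR : R ⊆ G.neighborFinset v)
    (hN : ∀ x ∈ R, ∀ y ∈ R, H.Adj x y → y ∈ N x ∨ x ∈ N y) :
    #(H.interedges R R) ≤ 2 * #(arcsInNeighborhood G N v) := by
  have hsub : H.interedges R R ⊆
      arcsInNeighborhood G N v ∪ (arcsInNeighborhood G N v).image Prod.swap := by
    rintro ⟨x, y⟩ hxy
    obtain ⟨hx, hy, hadj⟩ := (mk_mem_interedges_iff H).1 hxy
    have hvx := (mem_neighborFinset ..).1 (hR hx)
    have hvy := (mem_neighborFinset ..).1 (hR hy)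
    simpa [arcsInNeighborhood, hvx, hvy] using hN x hx y hy hadj
  have hcard := card_le_card hsub
  grw [card_union_le, card_image_le] at hcard
  lia

lemma LocallySparse.sum_card_arcsInNeighborhood_le {d : ℝ} (hd : 1 ≤ d)
    (hG : LocallySparse G (50 * d) (d / 100)) (hN : ∀ x, (#(N x) : ℝ) ≤ 2.02 * d)
    (hsum : ∑ v, (G.degree v : ℝ) ≤ 2.02 * d * Fintype.card V) :
    ∑ v, (#(arcsInNeighborhood G N v) : ℝ) ≤ 0.085 * d ^ 2 * Fintype.card V := by
  set s := ⌈40 * d⌉₊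
  have hs : 40 * d ≤ s := Nat.le_ceil _
  have hs' : s < 40 * d + 1 := Nat.ceil_lt_add_one (by linarith)
  have hblock (x : V) : (#(G.interedges (G.neighborFinset x) (N x)) : ℝ) ≤
      d / 50 * (1.06 * G.degree x + 2.02 * d) := by
    have hratio : (#(N x) : ℝ) / s ≤ 0.06 := by
      rw [div_le_iff₀ (by linarith)]
      linarith [hN x]
    have hblocks := hG.card_interedges_le (by linarith) (s := s) (Nat.ceil_pos.2 (by linarith))
      (by linarith [hN x]) (G.neighborFinset x) (T := N x)
    rw [card_neighborFinset_eq_degree] at hblocks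
    calc (#(G.interedges (G.neighborFinset x) (N x)) : ℝ)
        ≤ 2 * (d / 100) * (G.degree x + (G.degree x / s + 1) * #(N x)) := hblocks
      _ = d / 50 * (G.degree x * (1 + #(N x) / s) + #(N x)) := by ring
      _ ≤ d / 50 * (G.degree x * (1 + 0.06) + 2.02 * d) := by
        gcongr
        exact hN x
      _ = d / 50 * (1.06 * G.degree x + 2.02 * d) := by ring
  calc ∑ v, (#(arcsInNeighborhood G N v) : ℝ)
      = ∑ x, (#(G.interedges (G.neighborFinset x) (N x)) : ℝ) :=
        mod_cast sum_card_arcsInNeighborhood G N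
    _ ≤ ∑ x, d / 50 * (1.06 * G.degree x + 2.02 * d) := sum_le_sum fun x _ => hblock x
    _ = d / 50 * (1.06 * ∑ x, (G.degree x : ℝ) + 2.02 * d * Fintype.card V) := by
        rw [← mul_sum, sum_add_distrib, ← mul_sum, sum_const, nsmul_eq_mul, card_univ]
        ring
    _ ≤ 0.085 * d ^ 2 * Fintype.card V := by nlinarith

end Averaging

namespace IsStarContraction

variable {G : SimpleGraph V} {g : V → V}

lemma exists_orientation_map [Finite V] (hg : IsStarContraction G g) {D : ℝ} (hD : 0 ≤ D)
    (hG : MinorDensityLT G D) :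
    ∃ N : V → Finset V, (∀ x, (#(N x) : ℝ) ≤ 2 * D) ∧
      ∀ x y, g x = x → g y = y → (G.map g).Adj x y → y ∈ N x ∨ x ∈ N y := by
  classical
  have := Fintype.ofFinite V
  obtain ⟨N, hNcard, hN⟩ := exists_orientation (G.map g) (mul_nonneg zero_le_two hD)
    {x | g x = x} fun X hX => hg.card_interedges_map_le hG fun x hx => by simpa using hX hx
  exact ⟨N, hNcard, fun x y hx hy => hN x (by simpa using hx) y (by simpa using hy)⟩

variable [Fintype V] [DecidableEq V] [DecidableRel G.Adj] {d : ℝ}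

lemma exists_adj_edgeSet_ncard_map_le {v : V} {N : V → Finset V} (hd : 50 ≤ d)
    (hdeg : d ≤ G.degree v) (hv : ∀ x, g x = v ↔ x = v)
    (hN : ∀ x y, g x = x → g y = y → (G.map g).Adj x y → y ∈ N x ∨ x ∈ N y)
    (hweight : #{w ∈ G.neighborFinset v | g w ≠ w} * d + 2 * #(arcsInNeighborhood G N v) ≤
      2 / 5 * d ^ 2) :
    ∃ u, g u = u ∧ G.Adj v u ∧ ((G.map g).edgeSet.ncard : ℝ) ≤
      (G.map (Function.update g v u)).edgeSet.ncard + d / 2 := by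
  classical
  let R : Finset V := {w ∈ G.neighborFinset v | g w = w}
  have hmemR : ∀ {w}, w ∈ R ↔ G.Adj v w ∧ g w = w := by simp [R]
  have hRcard : (#R + #{w ∈ G.neighborFinset v | g w ≠ w} : ℝ) = G.degree v :=
    mod_cast card_filter_add_card_filter_not (s := G.neighborFinset v) fun w => g w = w
  have harcs : (#((G.map g).interedges R R) : ℝ) ≤ 2 * #(arcsInNeighborhood G N v) :=
    mod_cast card_interedges_le_two_mul_card_arcsInNeighborhood (filter_subset _ _)
      fun x hx y hy => hN x y (hmemR.1 hx).2 (hmemR.1 hy).2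
  obtain ⟨u, huR, hu⟩ := exists_add_card_filter_adj_add_one_le (G := G.map g) (R := R)
    (a := #{w ∈ G.neighborFinset v | g w ≠ w}) hd (by linarith) (by linarith)
  refine ⟨u, (hmemR.1 huR).2, (hmemR.1 huR).1, ?_⟩
  have hloss := edgeSet_ncard_map_le_map_update G hv u
  rw [← filter_filter] at hloss
  have : ((G.map g).edgeSet.ncard : ℝ) ≤ (G.map (Function.update g v u)).edgeSet.ncard +
      #{w ∈ G.neighborFinset v | g w ≠ w} + #{w ∈ R | (G.map g).Adj u w} + 1 := mod_cast hloss
  linarith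

lemma exists_edgeSet_ncard_map_le_map_update [Nonempty V] (hg : IsStarContraction G g)
    (hd : 50 ≤ d) (hsparse : LocallySparse G (50 * d) (d / 100))
    (hminor : MinorDensityLT G (1.01 * d)) (hdeg : ∀ v, d ≤ G.degree v)
    (hmoved : (#{x | g x ≠ x} : ℝ) ≤ Fintype.card V / 50)
    (hmoved_deg : ∀ x, g x ≠ x → (G.degree x : ℝ) ≤ 5 * d) :
    ∃ v u, (∀ x, g x = v ↔ x = v) ∧ g u = u ∧ G.Adj v u ∧ (G.degree v : ℝ) ≤ 5 * d ∧
      ((G.map g).edgeSet.ncard : ℝ) ≤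
        (G.map (Function.update g v u)).edgeSet.ncard + d / 2 := by
  have hsum : ∑ v, (G.degree v : ℝ) ≤ 2.02 * d * Fintype.card V := by
    have := hminor.edgeSet_ncard_lt
    have hhandshake : (∑ v, (G.degree v : ℝ)) = 2 * G.edgeSet.ncard :=
      mod_cast sum_degree_eq_two_mul_ncard G
    linarith
  obtain ⟨N, hNcard, hN⟩ := hg.exists_orientation_map (by linarith) hminor
  have harcs := hsparse.sum_card_arcsInNeighborhood_le (N := N) (by linarith)
    (fun x => (hNcard x).trans_eq (by ring)) hsum
  have hmoved_nbrs := sum_card_filter_neighborFinset_le (fun x => g x ≠ x) hmoved_deg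
  let B : Finset V := ({x | g x ≠ x} : Finset V) ∪ ({x | g x ≠ x} : Finset V).image g
  have hB : (#B : ℝ) ≤ Fintype.card V / 25 := by
    have : #B ≤ #{x | g x ≠ x} + #{x | g x ≠ x} := by grw [card_union_le, card_image_le]
    have : (#B : ℝ) ≤ #{x | g x ≠ x} + #{x | g x ≠ x} := mod_cast this
    linarith
  obtain ⟨v, hvB, hvdeg, hvφ⟩ := exists_notMem_degree_le_weight_le (by linarith) hdeg hsum hB
    (φ := fun v =>
      #{w ∈ G.neighborFinset v | g w ≠ w} * d + 2 * #(arcsInNeighborhood G N v))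
    (fun v => by positivity) (by
      rw [sum_add_distrib, ← sum_mul, ← mul_sum]
      nlinarith)
  have hv : ∀ x, g x = v ↔ x = v := by
    simp only [B, mem_union, mem_image, mem_filter_univ, not_or, not_exists, not_and] at hvB
    refine fun x => ⟨fun hx => ?_, ?_⟩
    · by_contra hxv
      exact hvB.2 x (fun h => hxv (h.symm.trans hx)) hx
    · rintro rfl
      exact not_not.1 hvB.1
  obtain ⟨u, hu, hvu, hloss⟩ := exists_adj_edgeSet_ncard_map_le hd (hdeg v) hv hN hvφ
  exact ⟨v, u, hv, hu, hvu, hvdeg, hloss⟩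

lemma exists_card_moved_eq [Nonempty V] (hd : 50 ≤ d)
    (hsparse : LocallySparse G (50 * d) (d / 100)) (hminor : MinorDensityLT G (1.01 * d))
    (hdeg : ∀ v, d ≤ G.degree v) {i : ℕ} (hi : (i : ℝ) ≤ Fintype.card V / 50 + 1) :
    ∃ g, IsStarContraction G g ∧ #{x | g x ≠ x} = i ∧
      (∀ x, g x ≠ x → (G.degree x : ℝ) ≤ 5 * d) ∧
      (G.edgeSet.ncard : ℝ) ≤ (G.map g).edgeSet.ncard + i * (d / 2) := by
  induction i with
  | zero => exact ⟨id, .id, by simp, by simp, by simp⟩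
  | succ i ih =>
    push_cast at hi
    obtain ⟨g, hg, hcard, hmoved_deg, hedges⟩ := ih (by linarith)
    obtain ⟨v, u, hv, hu, hvu, hvdeg, hloss⟩ := hg.exists_edgeSet_ncard_map_le_map_update hd
      hsparse hminor hdeg (by rw [hcard]; linarith) hmoved_deg
    have hmoved : ({x | Function.update g v u x ≠ x} : Finset V) =
        insert v ({x | g x ≠ x} : Finset V) := by
      ext x
      rcases eq_or_ne x v with rfl | hxv
      · simp [hvu.ne']
      · simp [hxv]
    refine ⟨Function.update g v u, hg.update hv hu hvu, ?_, fun x hx => ?_, ?_⟩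
    · rw [hmoved, card_insert_of_notMem (by simp [(hv v).2 rfl]), hcard]
    · rcases eq_or_ne x v with rfl | hxv
      · exact hvdeg
      · exact hmoved_deg x (by simpa [hxv] using hx)
    · push_cast
      linarith

end IsStarContraction

lemma not_minorDensityLT_of_le_degree [Fintype V] [Nonempty V] {G : SimpleGraph V}
    [DecidableRel G.Adj] {ε d : ℝ} (hε : 0 < ε) (hε' : ε ≤ 1 / 100) (hd : 50 ≤ d)
    (hsparse : LocallySparse G (50 * d) (d / 100)) (hdeg : ∀ v, d ≤ G.degree v)
    (hedges : d * Fintype.card V ≤ G.edgeSet.ncard) : ¬ MinorDensityLT G ((1 + ε) * d) := by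
  classical
  intro hminor
  have hn : (50 : ℝ) ≤ Fintype.card V := by
    have hlt : (G.degree (Classical.arbitrary V) : ℝ) < Fintype.card V :=
      mod_cast G.degree_lt_card_verts _
    linarith [hdeg (Classical.arbitrary V)]
  obtain ⟨i, hi, hi'⟩ : ∃ i : ℕ, 2 * ε * Fintype.card V ≤ i ∧ i < 2 * ε * Fintype.card V + 1 :=
    ⟨_, Nat.le_ceil _, Nat.ceil_lt_add_one (by positivity)⟩
  have hin : (i : ℝ) < Fintype.card V / 50 + 1 := by nlinarith
  obtain ⟨g, hg, hmoved, -, hloss⟩ := IsStarContraction.exists_card_moved_eq hd hsparse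
    (hminor.mono (by nlinarith)) hdeg hin.le
  have hfixed : (#{x | g x = x} : ℝ) = Fintype.card V - i := by
    have hcard : #{x | g x = x} + #{x | g x ≠ x} = Fintype.card V :=
      card_filter_add_card_filter_not (s := univ) fun x => g x = x
    rw [← hcard, hmoved]
    push_cast
    ring
  have hne : ∃ x, g x = x := by
    have hpos : (0 : ℝ) < #{x | g x = x} := by linarith
    obtain ⟨x, hx⟩ := card_pos.1 (Nat.cast_pos.1 hpos)
    exact ⟨x, by simpa using hx⟩
  have hlt := hg.edgeSet_ncard_map_lt hminor hne
  rw [hfixed] at hlt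
  have hgain : d * (2 * ε * Fintype.card V) ≤ d * i := by gcongr
  have : 0 ≤ ε * (d * i) := by positivity
  linarith

lemma not_minorDensityLT [Fintype V] [Nonempty V] {G : SimpleGraph V} {ε d : ℝ} (hε : 0 < ε)
    (hε' : ε ≤ 1 / 100) (hd : 50 ≤ d) (hsparse : LocallySparse G (50 * d) (d / 100))
    (hedges : d * Fintype.card V ≤ G.edgeSet.ncard) : ¬ MinorDensityLT G ((1 + ε) * d) := by
  classical
  intro hminor
  obtain ⟨W, -, hW, hWedges, hWdeg⟩ := exists_subset_forall_le_degree G (by linarith) univ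
    univ_nonempty (d := d) (by rw [card_interedges_univ, card_univ]; push_cast; linarith)
  have : Nonempty W := hW.to_subtype
  let f : W ↪ V := .subtype (· ∈ W)
  have hmap : univ.map f = W := by rw [univ_eq_attach, attach_map_val]
  have hdeg (v : W) : (G.comap f).degree v = #{w ∈ W | G.Adj v w} := by
    have hnbrs : ((G.comap f).neighborFinset v).map f = {w ∈ W | G.Adj v w} := by
      ext
      simp only [mem_map, mem_neighborFinset, mem_filter]
      simp [f, and_comm]
    rw [← hnbrs, card_map, card_neighborFinset_eq_degree]
  have hedges' : #(G.interedges W W) = 2 * (G.comap f).edgeSet.ncard := by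
    rw [← card_interedges_univ, card_interedges_comap, hmap]
  refine not_minorDensityLT_of_le_degree hε hε' hd (hsparse.comap f) (fun v => ?_) ?_
    (hminor.comap f)
  · rw [hdeg]
    exact hWdeg v v.2
  · rw [hedges'] at hWedges
    push_cast at hWedges
    rw [Fintype.card_coe]
    linarith

lemma locallySparse_of_forall_subDensity_lt {G : SimpleGraph V} {q c : ℝ}
    (h : ∀ J : G.Subgraph, (J.verts.ncard : ℝ) ≤ q → subDensity J < c) : LocallySparse G q c := by
  classical
  intro S hS
  let J : G.Subgraph := (⊤ : G.Subgraph).induce S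
  have hverts : J.verts.ncard = #S := Set.ncard_coe_finset S
  have hedges : J.edgeSet.ncard = (G.induce (S : Set V)).edgeSet.ncard := by
    rw [induce_eq_coe_induce_top, ← Subgraph.image_coe_edgeSet_coe,
      Set.ncard_image_of_injective _ (Sym2.map.injective Subtype.val_injective)]
    rfl
  rcases S.eq_empty_or_nonempty with rfl | hne
  · have hempty := (card_interedges_self G ∅).symm
    rw [interedges_empty_left, card_empty] at hempty
    simpa using hempty
  · have hlt := h J (by rwa [hverts])
    have : (0 : ℝ) < #S := mod_cast hne.card_pos
    rw [subDensity, hverts, hedges, div_lt_iff₀ this] at hlt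
    exact hlt.le

lemma fifty_le_of_locallySparse {G : SimpleGraph V} {ε d : ℝ} (hε : 0 < ε)
    (hε' : ε ≤ 1 / 100) (hsparse : LocallySparse G (d / (2 * ε)) (ε * d))
    (hminor : MinorDensityLT G ((1 + ε) * d)) (hG : G ≠ ⊥) : 50 ≤ d := by
  classical
  obtain ⟨a, b, hab⟩ := ne_bot_iff_exists_adj.1 hG
  have hcard : #{a, b} = 2 := card_pair hab.ne
  have hedge : (2 : ℝ) ≤ #(G.interedges {a, b} {a, b}) := by
    have hsub : {(a, b), (b, a)} ⊆ G.interedges {a, b} {a, b} := by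
      simp [insert_subset_iff, mk_mem_interedges_iff, hab, hab.symm]
    have hle := card_le_card hsub
    rw [card_pair (by simp [hab.ne])] at hle
    exact_mod_cast hle
  have hdense := hminor.card_interedges_lt (insert_nonempty a {b}) (isMinor_induce G _)
  rw [hcard, Nat.cast_ofNat] at hdense
  have hd : 12 / 25 ≤ d := by nlinarith
  have hsmall : (2 : ℝ) ≤ d / (2 * ε) := by
    rw [le_div_iff₀ (by positivity)]
    linarith
  have hspan := hsparse.card_interedges_self_le (S := {a, b}) (by rwa [hcard, Nat.cast_ofNat])
  rw [hcard, Nat.cast_ofNat] at hspan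
  nlinarith

end

theorem density_increment_general (ε : ℝ) (hε : 0 < ε) (hε' : ε ≤ 1 / 100)
    {V : Type*} [Finite V] [Nonempty V] (G : SimpleGraph V) :
    (∃ J : G.Subgraph, (J.verts.ncard : ℝ) ≤ density G / (2 * ε) ∧
        ε * density G ≤ subDensity J) ∨
    (∃ (m : ℕ) (H : SimpleGraph (Fin m)), 0 < m ∧ IsMinor H G ∧
        (1 + ε) * density G ≤ density H) := by
  by_contra! ⟨hsub, hmin⟩
  have hsparse := locallySparse_of_forall_subDensity_lt hsub
  have hminor : MinorDensityLT G ((1 + ε) * density G) := hmin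
  have := Fintype.ofFinite V
  have hedges : density G * Fintype.card V = G.edgeSet.ncard := by
    rw [density, Nat.card_eq_fintype_card]
    field_simp
  have hne : G ≠ ⊥ := by
    rintro rfl
    simpa [density] using hminor.edgeSet_ncard_lt
  have hd : 50 ≤ density G := fifty_le_of_locallySparse hε hε' hsparse hminor hne
  refine not_minorDensityLT hε hε' hd (hsparse.mono ?_ ?_) hedges.le hminor
  · rw [le_div_iff₀ (by positivity)]
    nlinarith
  · nlinarith

theorem density_increment (ε : ℝ) (hε : 0 < ε) (hε' : ε < 1 / 100)
    (V : Type) [Fintype V] [Nonempty V] (G : SimpleGraph V)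
    (hd : 2 / ε ≤ density G) :
    (∃ J : G.Subgraph, (J.verts.ncard : ℝ) ≤ density G / (2 * ε) ∧
        ε * density G ≤ subDensity J) ∨
    (∃ (m : ℕ) (H : SimpleGraph (Fin m)), 0 < m ∧ IsMinor H G ∧
        (1 + ε) * density G ≤ density H) :=
  density_increment_general ε hε hε'.le G
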